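/- Let X be an ∞-pseudo-metric space such that for every t > 0, X is a finite union of subsets of scale-t-dimension 0. If X is of scale-r-dimension 0 for some r > 0, then for each s > 0 there exist finitely many subsets X_0,…,X_p covering X that are pairwise scale-r-disjoint and each of scale-s-dimension 0. -/

import Mathlib

open Set
open scoped ENNReal

/-- `y` is joined to `x` by a scale-`r`-chain in `A`: a finite sequence of points of `A`
starting at `x` and ending at `y`, consecutive points of which have intersecting open
`r`-balls. -/
def ScaleChain {X : Type*} [PseudoEMetricSpace X] (r : ℝ) (A : Set X) (x y : X) : Prop :=
  ∃ n : ℕ, ∃ c : ℕ → X, (∀ i ≤ n, c i ∈ A) ∧ c 0 = x ∧ c n = y ∧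
    ∀ i < n,
      (EMetric.ball (c i) (ENNReal.ofReal r) ∩
        EMetric.ball (c (i + 1)) (ENNReal.ofReal r)).Nonempty

/-- The scale-`r`-component of `x` in `A`: all points of `A` joined to `x` by a
scale-`r`-chain in `A`. -/
def ScaleComponent {X : Type*} [PseudoEMetricSpace X] (r : ℝ) (A : Set X) (x : X) : Set X :=
  {y | ScaleChain r A x y}

/-- `A` has scale-`r`-dimension `0`: there is a finite bound on the diameters of all
scale-`r`-components of `A`. -/
def ScaleDimZero {X : Type*} [PseudoEMetricSpace X] (r : ℝ) (A : Set X) : Prop :=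
  ∃ M : ℝ≥0∞, M ≠ ⊤ ∧ ∀ x ∈ A, EMetric.diam (ScaleComponent r A x) ≤ M

/-- `C` and `D` are scale-`r`-disjoint: their open `r`-neighborhoods are disjoint. -/
def ScaleDisjoint {X : Type*} [PseudoEMetricSpace X] (r : ℝ) (C D : Set X) : Prop :=
  Metric.thickening r C ∩ Metric.thickening r D = ∅

/-! Collapse `X` by a map `o` sending every point to a chosen point of its scale-`r`-component.
Since the components have diameter at most some `M`, the map `o` moves points by at most `M`, so
pulling back along `o` turns scale-`t`-dimension `0` into scale-`s`-dimension `0` as soon as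
`t ≥ 2s + 2M`. On the other hand `o` is constant on components, so any pullbacks along `o` of
disjoint sets are scale-`r`-disjoint. Hence one makes a cover by sets of scale-`t`-dimension `0`
disjoint and pulls it back along `o`. -/

section

variable {X Y : Type*} [PseudoEMetricSpace X] [PseudoEMetricSpace Y]

/-- Scale-`r`-adjacency, the relation between consecutive points of a scale-`r`-chain: the open
`r`-balls around the two points intersect. -/
def ScaleAdj (r : ℝ) (x y : X) : Prop :=
  (Metric.eball x (ENNReal.ofReal r) ∩ Metric.eball y (ENNReal.ofReal r)).Nonempty

lemma ScaleAdj.symm {r : ℝ} {x y : X} (h : ScaleAdj r x y) : ScaleAdj r y x := by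
  rwa [ScaleAdj, inter_comm]

lemma ScaleAdj.edist_lt {r : ℝ} {x y : X} (h : ScaleAdj r x y) :
    edist x y < 2 * ENNReal.ofReal r := by
  obtain ⟨z, hzx, hzy⟩ := h
  calc edist x y ≤ edist x z + edist z y := edist_triangle x z y
    _ < ENNReal.ofReal r + ENNReal.ofReal r :=
        ENNReal.add_lt_add (Metric.mem_eball'.1 hzx) (Metric.mem_eball.1 hzy)
    _ = 2 * ENNReal.ofReal r := (two_mul _).symm

lemma scaleAdj_of_edist_lt {r : ℝ} {x y : X} (h : edist x y < ENNReal.ofReal r) :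
    ScaleAdj r x y :=
  ⟨x, Metric.mem_eball_self (pos_of_gt h), h⟩

lemma ScaleChain.refl {r : ℝ} {A : Set X} {x : X} (hx : x ∈ A) : ScaleChain r A x x :=
  ⟨0, fun _ => x, fun _ _ => hx, rfl, rfl, fun _ hi => absurd hi (Nat.not_lt_zero _)⟩

lemma ScaleChain.cons {r : ℝ} {A : Set X} {x y z : X} (hx : x ∈ A) (hxy : ScaleAdj r x y)
    (h : ScaleChain r A y z) : ScaleChain r A x z := by
  obtain ⟨n, c, hcA, rfl, rfl, hc⟩ := h
  refine ⟨n + 1, fun | 0 => x | i + 1 => c i, ?_, rfl, rfl, ?_⟩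
  · rintro (_ | i) hi
    exacts [hx, hcA i (Nat.le_of_succ_le_succ hi)]
  · rintro (_ | i) hi
    exacts [hxy, hc i (Nat.lt_of_succ_lt_succ hi)]

lemma ScaleChain.map {s t : ℝ} {A : Set X} {B : Set Y} {f : X → Y} {x y : X}
    (h : ScaleChain s A x y) (hAB : MapsTo f A B)
    (hadj : ∀ x ∈ A, ∀ y ∈ A, ScaleAdj s x y → ScaleAdj t (f x) (f y)) :
    ScaleChain t B (f x) (f y) := by
  obtain ⟨n, c, hcA, rfl, rfl, hc⟩ := h
  exact ⟨n, f ∘ c, fun i hi => hAB (hcA i hi), rfl, rfl,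
    fun i hi => hadj _ (hcA i hi.le) _ (hcA (i + 1) hi) (hc i hi)⟩

lemma scaleComponent_subset (r : ℝ) (A : Set X) (x : X) : ScaleComponent r A x ⊆ A := by
  rintro _ ⟨n, c, hcA, -, rfl, -⟩
  exact hcA n le_rfl

lemma scaleComponent_eq_of_scaleAdj {r : ℝ} {A : Set X} {x y : X} (hx : x ∈ A) (hy : y ∈ A)
    (h : ScaleAdj r x y) : ScaleComponent r A x = ScaleComponent r A y :=
  Subset.antisymm (fun _ => .cons hy h.symm) (fun _ => .cons hx h)

lemma exists_scaleComponent_representative (r : ℝ) (A : Set X) :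
    ∃ o : X → X, (∀ x ∈ A, o x ∈ ScaleComponent r A x) ∧
      ∀ x ∈ A, ∀ y ∈ A, ScaleAdj r x y → o x = o y := by
  -- `ε` depends on the component only as a set, its nonemptiness argument `⟨x⟩` being a proof.
  refine ⟨fun x => @Classical.epsilon X ⟨x⟩ (· ∈ ScaleComponent r A x), fun x hx => ?_,
    fun x hx y hy h => ?_⟩
  · exact Classical.epsilon_spec (p := (· ∈ ScaleComponent r A x)) ⟨x, .refl hx⟩
  · simp only [scaleComponent_eq_of_scaleAdj hx hy h]

lemma scaleDimZero_empty (r : ℝ) : ScaleDimZero r (∅ : Set X) :=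
  ⟨0, ENNReal.zero_ne_top, fun _ hx => hx.elim⟩

lemma ScaleDimZero.of_mapsTo {s t : ℝ} {K : ℝ≥0∞} {A : Set X} {B : Set Y} {f : X → Y}
    (hB : ScaleDimZero t B) (hAB : MapsTo f A B)
    (hadj : ∀ x ∈ A, ∀ y ∈ A, ScaleAdj s x y → ScaleAdj t (f x) (f y)) (hK : K ≠ ⊤)
    (hedist : ∀ x ∈ A, ∀ y ∈ A, edist x y ≤ edist (f x) (f y) + K) :
    ScaleDimZero s A := by
  obtain ⟨N, hN, hBN⟩ := hB
  refine ⟨N + K, by finiteness, fun x hx => Metric.ediam_le fun y hy z hz => ?_⟩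
  have hfyz : edist (f y) (f z) ≤ N :=
    (Metric.edist_le_ediam_of_mem (s := ScaleComponent t B (f x)) (hy.map hAB hadj)
      (hz.map hAB hadj)).trans (hBN _ (hAB hx))
  calc edist y z ≤ edist (f y) (f z) + K :=
        hedist y (scaleComponent_subset s A x hy) z (scaleComponent_subset s A x hz)
    _ ≤ N + K := by gcongr

lemma edist_le_edist_add_two_mul {M : ℝ≥0∞} {x x' y y' : X} (hx : edist x x' ≤ M)
    (hy : edist y y' ≤ M) : edist x y ≤ edist x' y' + 2 * M :=
  calc edist x y ≤ edist x x' + edist x' y' + edist y' y := edist_triangle4 _ _ _ _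
    _ ≤ M + edist x' y' + M := by
        gcongr
        rwa [edist_comm]
    _ = edist x' y' + 2 * M := by ring

lemma ScaleDimZero.of_mapsTo_of_edist_le {s t : ℝ} {M : ℝ≥0∞} {A B : Set X} {o : X → X}
    (hB : ScaleDimZero t B) (hAB : MapsTo o A B) (hM : M ≠ ⊤) (ho : ∀ x ∈ A, edist x (o x) ≤ M)
    (ht : 2 * ENNReal.ofReal s + 2 * M ≤ ENNReal.ofReal t) : ScaleDimZero s A := by
  have h2M : 2 * M ≠ ⊤ := by finiteness
  refine hB.of_mapsTo hAB (fun x hx y hy hxy => scaleAdj_of_edist_lt ?_) h2M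
    fun x hx y hy => edist_le_edist_add_two_mul (ho x hx) (ho y hy)
  calc edist (o x) (o y) ≤ edist x y + 2 * M :=
        edist_le_edist_add_two_mul (edist_comm x _ ▸ ho x hx) (edist_comm y _ ▸ ho y hy)
    _ < 2 * ENNReal.ofReal s + 2 * M := ENNReal.add_lt_add_right h2M hxy.edist_lt
    _ ≤ ENNReal.ofReal t := ht

lemma scaleDisjoint_preimage {ι : Type*} {r : ℝ} {f : X → ι}
    (hf : ∀ x y, ScaleAdj r x y → f x = f y) {S T : Set ι} (hST : Disjoint S T) :
    ScaleDisjoint r (f ⁻¹' S) (f ⁻¹' T) := by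
  refine eq_empty_of_forall_notMem fun z ⟨hzS, hzT⟩ => ?_
  obtain ⟨x, hx, hzx⟩ := (Metric.mem_thickening_iff_exists_edist_lt _ _).1 hzS
  obtain ⟨y, hy, hzy⟩ := (Metric.mem_thickening_iff_exists_edist_lt _ _).1 hzT
  exact hST.ne_of_mem hx hy (hf x y ⟨z, hzx, hzy⟩)

theorem scale_disjoint_refinement_general {r : ℝ} (hX : ScaleDimZero r (univ : Set X)) (s : ℝ) :
    ∃ t : ℝ, 0 < t ∧ ∀ {ι : Type*} (F : ι → Set X), (⋃ i, F i) = univ →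
      (∀ i, ScaleDimZero t (F i)) →
      ∃ G : ι → Set X, (⋃ i, G i) = univ ∧ (∀ i j, i ≠ j → ScaleDisjoint r (G i) (G j)) ∧
        ∀ i, ScaleDimZero s (G i) := by
  obtain ⟨M, hM, hXM⟩ := hX
  obtain ⟨o, ho_mem, ho_adj⟩ := exists_scaleComponent_representative r (univ : Set X)
  have ho_edist (x : X) : edist x (o x) ≤ M :=
    (Metric.edist_le_ediam_of_mem (s := ScaleComponent r univ x) (.refl (mem_univ x))
      (ho_mem x (mem_univ x))).trans (hXM x (mem_univ x))
  obtain ⟨t, ht_pos, ht⟩ : ∃ t : ℝ, 0 < t ∧ 2 * ENNReal.ofReal s + 2 * M ≤ ENNReal.ofReal t :=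
    ⟨(2 * ENNReal.ofReal s + 2 * M).toReal + 1, by positivity,
      (ENNReal.le_ofReal_iff_toReal_le (by finiteness) (by positivity)).2 (by linarith)⟩
  refine ⟨t, ht_pos, fun F hF hF0 => ?_⟩
  choose a ha using iUnion_eq_univ_iff.1 hF
  refine ⟨fun i => (a ∘ o) ⁻¹' {i}, ?_, fun i j hij => ?_, fun i => ?_⟩
  · exact iUnion_eq_univ_iff.2 fun x => ⟨a (o x), rfl⟩
  · have hao (x y : X) (h : ScaleAdj r x y) : (a ∘ o) x = (a ∘ o) y :=
      congrArg a (ho_adj x (mem_univ x) y (mem_univ y) h)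
    exact scaleDisjoint_preimage hao (disjoint_singleton.2 hij)
  · have ho_maps : MapsTo o ((a ∘ o) ⁻¹' {i}) (F i) := by
      rintro x rfl
      exact ha (o x)
    exact (hF0 i).of_mapsTo_of_edist_le ho_maps hM (fun x _ => ho_edist x) ht

end

/-- Let `X` be an `∞`-pseudo-metric space such that for every `t > 0`, `X` is a finite union
of subsets of scale-`t`-dimension `0`. If `X` is of scale-`r`-dimension `0` for some `r > 0`,
then for each `s > 0` there exist finitely many subsets `X_0, …, X_p` covering `X` that are
pairwise scale-`r`-disjoint and each of scale-`s`-dimension `0`. -/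
theorem scale_disjoint_refinement {X : Type*} [PseudoEMetricSpace X]
    (hfin : ∀ t : ℝ, 0 < t → ∃ n : ℕ, ∃ F : Fin n → Set X,
      (⋃ i, F i) = univ ∧ ∀ i, ScaleDimZero t (F i))
    (r : ℝ) (hr : 0 < r) (hX : ScaleDimZero r (univ : Set X)) :
    ∀ s : ℝ, 0 < s →
      ∃ p : ℕ, ∃ F : Fin (p + 1) → Set X,
        (⋃ i, F i) = univ ∧
        (∀ i j, i ≠ j → ScaleDisjoint r (F i) (F j)) ∧
        (∀ i, ScaleDimZero s (F i)) := by
  intro s _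
  obtain ⟨t, ht, hrefine⟩ := scale_disjoint_refinement_general hX s
  obtain ⟨n, F, hF, hF0⟩ := hfin t ht
  have hcover : (⋃ i, (Fin.cons ∅ F : Fin (n + 1) → Set X) i) = univ := by
    simpa [iUnion_eq_univ_iff, Fin.exists_fin_succ] using hF
  exact ⟨n, hrefine _ hcover (Fin.cases (scaleDimZero_empty t) hF0)⟩
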